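/- arXiv:2208.09160 — 3 statements merged into one kernel-verified Lean document; each statement's English description precedes it below -/
import Mathlib

section
/- Let C_1, …, C_m be clauses over n Boolean variables, for an assignment A let m_A denote the number of these clauses satisfied by A, and let opt = max_A m_A. Let W be a sub-collection of the clauses and for an assignment A let m'_A denote the number of clauses of W satisfied by A. Suppose p > 0 and 0 ≤ ε are real numbers such that |m'_A − p · m_A| ≤ ε · p · opt for every assignment A. If 0 ≤ α ≤ 1 and à is an assignment with m'_à ≥ α · max_A m'_A, then m_à ≥ (α − 2ε) · opt. -/
/-- An assignment `a` satisfies a clause `C` iff some literal `(i, b) ∈ C` has `a i = b`. -/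
def Satisfies {n : ℕ} (a : Fin n → Bool) (C : Finset (Fin n × Bool)) : Prop :=
  ∃ l ∈ C, a l.1 = l.2

instance {n : ℕ} (a : Fin n → Bool) (C : Finset (Fin n × Bool)) :
    Decidable (Satisfies a C) := by
  unfold Satisfies; infer_instance

/-- The number of clauses of the sub-collection `W ⊆ {1, …, m}` satisfied by `a`. -/
def satCount (n m : ℕ) (C : Fin m → Finset (Fin n × Bool)) (W : Finset (Fin m))
    (a : Fin n → Bool) : ℕ :=
  (W.filter fun j => Satisfies a (C j)).card

section ApproximateMaximizers

variable {ι : Type*}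

lemma ciSup_le_ciSup_add_of_forall_le_add {R : Type*} [ConditionallyCompleteLattice R] [Add R]
    [AddRightMono R] [Nonempty ι] {f g : ι → R} {δ : R} (hg : BddAbove (Set.range g))
    (h : ∀ i, f i ≤ g i + δ) : ⨆ i, f i ≤ (⨆ i, g i) + δ :=
  ciSup_le fun i => (h i).trans (add_le_add_left (le_ciSup hg i) δ)

-- The error `δ` is paid twice: in comparing the suprema, where it is scaled by `α ≤ 1`,
-- and in passing from `g i₀` back to `f i₀`.
lemma mul_ciSup_sub_two_mul_le_of_abs_sub_le {f g : ι → ℝ} {α δ : ℝ} {i₀ : ι}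
    (hg : BddAbove (Set.range g)) (hα0 : 0 ≤ α) (hα1 : α ≤ 1)
    (hclose : ∀ i, |g i - f i| ≤ δ) (happrox : α * ⨆ i, g i ≤ g i₀) :
    α * (⨆ i, f i) - 2 * δ ≤ f i₀ := by
  have : Nonempty ι := ⟨i₀⟩
  have hδ : 0 ≤ δ := (abs_nonneg _).trans (hclose i₀)
  have hsup : ⨆ i, f i ≤ (⨆ i, g i) + δ :=
    ciSup_le_ciSup_add_of_forall_le_add hg fun i => by linarith [(abs_le.mp (hclose i)).1]
  have hi₀ : g i₀ ≤ f i₀ + δ := by linarith [(abs_le.mp (hclose i₀)).2]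
  calc
    α * (⨆ i, f i) - 2 * δ ≤ α * ((⨆ i, g i) + δ) - 2 * δ := by gcongr
    _ = α * (⨆ i, g i) + α * δ - 2 * δ := by ring
    _ ≤ g i₀ + 1 * δ - 2 * δ := by gcongr
    _ ≤ f i₀ := by linarith

theorem stmt_7_general {f g : ι → ℝ} {p ε α : ℝ} {i₀ : ι} (hg : BddAbove (Set.range g))
    (hp : 0 < p) (hα0 : 0 ≤ α) (hα1 : α ≤ 1)
    (hclose : ∀ i, |g i - p * f i| ≤ ε * p * ⨆ j, f j) (happrox : α * ⨆ i, g i ≤ g i₀) :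
    (α - 2 * ε) * ⨆ i, f i ≤ f i₀ := by
  refine le_of_mul_le_mul_left ?_ hp
  calc
    p * ((α - 2 * ε) * ⨆ i, f i) = α * (p * ⨆ i, f i) - 2 * (ε * p * ⨆ i, f i) := by ring
    _ = α * (⨆ i, p * f i) - 2 * (ε * p * ⨆ i, f i) := by rw [Real.mul_iSup_of_nonneg hp.le]
    _ ≤ p * f i₀ := mul_ciSup_sub_two_mul_le_of_abs_sub_le hg hα0 hα1 hclose happrox

end ApproximateMaximizers

/-- Let `C 1, …, C m` be clauses over `n` Boolean variables, `m_A` the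
number of clauses satisfied by an assignment `A`, and `opt = max_A m_A`. Let `W` be a
sub-collection of the clauses and `m'_A` the number of clauses of `W` satisfied by `A`.
Suppose `p > 0` and `ε ≥ 0` are such that `|m'_A − p·m_A| ≤ ε·p·opt` for every `A`.
If `0 ≤ α ≤ 1` and `Ã` satisfies `m'_Ã ≥ α · max_A m'_A`, then `m_Ã ≥ (α − 2ε)·opt`. -/
theorem stmt_7 (n m : ℕ) (C : Fin m → Finset (Fin n × Bool)) (W : Finset (Fin m))
    (p ε α : ℝ) (hp : 0 < p) (hε : 0 ≤ ε) (hα0 : 0 ≤ α) (hα1 : α ≤ 1)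
    (Atil : Fin n → Bool)
    (hclose : ∀ A : Fin n → Bool,
      |(satCount n m C W A : ℝ) - p * (satCount n m C Finset.univ A : ℝ)|
        ≤ ε * p * (⨆ A' : Fin n → Bool, (satCount n m C Finset.univ A' : ℝ)))
    (happrox : α * (⨆ A' : Fin n → Bool, (satCount n m C W A' : ℝ))
        ≤ (satCount n m C W Atil : ℝ)) :
    (α - 2 * ε) * (⨆ A' : Fin n → Bool, (satCount n m C Finset.univ A' : ℝ))
      ≤ (satCount n m C Finset.univ Atil : ℝ) :=
  stmt_7_general (Set.finite_range _).bddAbove hp hα0 hα1 hclose happrox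
end

section
/- Let C_1, …, C_m be clauses over n ≥ 1 Boolean variables, let f ≥ 1, and suppose every variable occurs (in either polarity) in at most f of the clauses. Let opt denote the minimum over all assignments of the number of clauses satisfied, and assume opt ≥ 1. Call a clause small if it has at most √(f·n) literals, and for each literal ℓ let S_ℓ be the set of indices of small clauses containing ℓ. Define an assignment a by setting a i = true if |S_{(i,true)}| ≤ |S_{(i,false)}| and a i = false otherwise. Then the number of clauses (small or large) satisfied by a is at most 2·√(f·n)·opt. -/
/-- `smallSet n m C f l` is the set `S_ℓ` of indices of small clauses (clauses with at
most `√(f·n)` literals) containing the literal `l`. -/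
noncomputable def smallSet (n m : ℕ) (C : Fin m → Finset (Fin n × Bool)) (f : ℕ)
    (l : Fin n × Bool) : Finset (Fin m) :=
  Finset.univ.filter fun j => ((C j).card : ℝ) ≤ Real.sqrt ((f : ℝ) * n) ∧ l ∈ C j

/-!
Call the assignment of the theorem `a` and let `A` be optimal. Counting pairs (variable, clause),
the number of small clauses satisfied by `a` is at most `∑ i, |S_(i, a i)| ≤ ∑ i, |S_(i, A i)|`, and
the last sum counts each small clause satisfied by `A` at most `√(f·n)` times. A clause falsified by
`A` consists of literals true under the complement of `A`, so the same count, for the complement,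
bounds the total size of these clauses by `f·n`; hence at most `√(f·n)` of them are large, and the
other large clauses are already satisfied by `A`.
-/

open Finset

section Counting

variable {n : ℕ} {ι : Type*} {a A : Fin n → Bool} {C : ι → Finset (Fin n × Bool)} {S : Finset ι}
  {f : ℕ} {t : ℝ}

/-- The set of literals of the clause `D` that are true under `A`. Its cardinality is the
multiplicity with which `D` is counted in the sums over variables below. -/
def trueLiterals (A : Fin n → Bool) (D : Finset (Fin n × Bool)) : Finset (Fin n × Bool) :=
  {l ∈ D | A l.1 = l.2}

theorem trueLiterals_nonempty_iff {D : Finset (Fin n × Bool)} :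
    (trueLiterals A D).Nonempty ↔ Satisfies A D :=
  filter_nonempty_iff

theorem trueLiterals_not_of_not_satisfies {D : Finset (Fin n × Bool)} (hD : ¬ Satisfies A D) :
    trueLiterals (fun i => !A i) D = D :=
  filter_true_of_mem fun l hl => Bool.not_eq.mpr fun h => hD ⟨l, hl, h⟩

theorem card_trueLiterals (A : Fin n → Bool) (D : Finset (Fin n × Bool)) :
    #(trueLiterals A D) = #{i | (i, A i) ∈ D} := by
  refine (card_nbij' (fun i => (i, A i)) Prod.fst ?_ ?_ ?_ ?_).symm <;>
    simp +contextual [trueLiterals, Set.MapsTo, Set.LeftInvOn]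

theorem sum_card_trueLiterals (A : Fin n → Bool) (C : ι → Finset (Fin n × Bool)) (S : Finset ι) :
    ∑ j ∈ S, #(trueLiterals A (C j)) = ∑ i, #{j ∈ S | (i, A i) ∈ C j} := by
  simp only [card_trueLiterals]
  exact sum_card_bipartiteAbove_eq_sum_card_bipartiteBelow fun j i => (i, A i) ∈ C j

theorem card_satisfies_le_sum_card_trueLiterals :
    #{j ∈ S | Satisfies A (C j)} ≤ ∑ j ∈ S, #(trueLiterals A (C j)) := by
  rw [card_filter]
  gcongr with j
  split_ifs with h
  · exact (trueLiterals_nonempty_iff.mpr h).card_pos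
  · exact zero_le

theorem sum_card_trueLiterals_le (hS : ∀ j ∈ S, (#(C j) : ℝ) ≤ t) :
    ((∑ j ∈ S, #(trueLiterals A (C j)) : ℕ) : ℝ) ≤ t * #{j ∈ S | Satisfies A (C j)} := by
  rw [mul_comm, ← nsmul_eq_mul, ← sum_const, sum_filter, Nat.cast_sum]
  refine sum_le_sum fun j hj => ?_
  split_ifs with h
  · exact (Nat.cast_le.mpr (card_filter_le _ _)).trans (hS j hj)
  · simp [not_nonempty_iff_eq_empty.mp (trueLiterals_nonempty_iff.not.mpr h)]

theorem card_satisfies_le_mul_of_card_le (hS : ∀ j ∈ S, (#(C j) : ℝ) ≤ t)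
    (ha : ∀ i, #{j ∈ S | (i, a i) ∈ C j} ≤ #{j ∈ S | (i, A i) ∈ C j}) :
    (#{j ∈ S | Satisfies a (C j)} : ℝ) ≤ t * #{j ∈ S | Satisfies A (C j)} := by
  refine le_trans (Nat.cast_le.mpr ?_) (sum_card_trueLiterals_le hS)
  calc #{j ∈ S | Satisfies a (C j)}
    _ ≤ ∑ j ∈ S, #(trueLiterals a (C j)) := card_satisfies_le_sum_card_trueLiterals
    _ = ∑ i, #{j ∈ S | (i, a i) ∈ C j} := sum_card_trueLiterals a C S
    _ ≤ ∑ i, #{j ∈ S | (i, A i) ∈ C j} := sum_le_sum fun i _ => ha i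
    _ = ∑ j ∈ S, #(trueLiterals A (C j)) := (sum_card_trueLiterals A C S).symm

theorem sum_card_le_of_forall_not_satisfies (hS : ∀ j ∈ S, ¬ Satisfies A (C j))
    (hocc : ∀ l, #{j ∈ S | l ∈ C j} ≤ f) : ∑ j ∈ S, #(C j) ≤ n * f :=
  calc ∑ j ∈ S, #(C j)
    _ = ∑ j ∈ S, #(trueLiterals (fun i => !A i) (C j)) :=
      sum_congr rfl fun j hj => by rw [trueLiterals_not_of_not_satisfies (hS j hj)]
    _ = ∑ i, #{j ∈ S | (i, !A i) ∈ C j} := sum_card_trueLiterals _ C S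
    _ ≤ ∑ _i : Fin n, f := sum_le_sum fun i _ => hocc (i, !A i)
    _ = n * f := by simp

theorem card_le_div_of_forall_not_satisfies (ht : 0 < t) (hlarge : ∀ j ∈ S, t ≤ #(C j))
    (hS : ∀ j ∈ S, ¬ Satisfies A (C j)) (hocc : ∀ l, #{j ∈ S | l ∈ C j} ≤ f) :
    (#S : ℝ) ≤ n * f / t := by
  rw [le_div_iff₀ ht]
  calc #S * t
    _ ≤ ∑ j ∈ S, (#(C j) : ℝ) := by simpa using card_nsmul_le_sum S _ t hlarge
    _ ≤ n * f := mod_cast sum_card_le_of_forall_not_satisfies hS hocc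

theorem card_satisfies_le_mul_add_div [Fintype ι] (ht : 1 ≤ t) (hocc : ∀ l, #{j | l ∈ C j} ≤ f)
    (ha : ∀ i b, #{j | (#(C j) : ℝ) ≤ t ∧ (i, a i) ∈ C j} ≤
      #{j | (#(C j) : ℝ) ≤ t ∧ (i, b) ∈ C j}) :
    (#{j | Satisfies a (C j)} : ℝ) ≤ t * #{j | Satisfies A (C j)} + n * f / t := by
  let small : Finset ι := {j | (#(C j) : ℝ) ≤ t}
  let large : Finset ι := {j | ¬ (#(C j) : ℝ) ≤ t}
  have split (B : Fin n → Bool) : (#{j | Satisfies B (C j)} : ℝ) =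
      #{j ∈ small | Satisfies B (C j)} + #{j ∈ large | Satisfies B (C j)} := by
    rw [← card_filter_add_card_filter_not (fun j => (#(C j) : ℝ) ≤ t), filter_comm,
      filter_comm (fun j => ¬ (#(C j) : ℝ) ≤ t), Nat.cast_add]
  have small_le : (#{j ∈ small | Satisfies a (C j)} : ℝ) ≤
      t * #{j ∈ small | Satisfies A (C j)} :=
    card_satisfies_le_mul_of_card_le (fun j hj => (mem_filter.mp hj).2) fun i => by
      simpa only [small, filter_filter] using ha i (A i)
  have falsified_le : (#{j ∈ large | ¬ Satisfies A (C j)} : ℝ) ≤ n * f / t := by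
    refine card_le_div_of_forall_not_satisfies (by linarith) (fun j hj => ?_)
      (fun j hj => (mem_filter.mp hj).2)
      fun l => (card_le_card (filter_subset_filter _ (subset_univ _))).trans (hocc l)
    exact (not_le.mp (mem_filter.mp (mem_filter.mp hj).1).2).le
  have large_le : (#{j ∈ large | Satisfies a (C j)} : ℝ) ≤
      t * #{j ∈ large | Satisfies A (C j)} + n * f / t :=
    calc (#{j ∈ large | Satisfies a (C j)} : ℝ)
      _ ≤ #large := Nat.cast_le.mpr (card_filter_le _ _)
      _ = #{j ∈ large | Satisfies A (C j)} + #{j ∈ large | ¬ Satisfies A (C j)} :=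
        mod_cast (card_filter_add_card_filter_not _).symm
      _ ≤ t * #{j ∈ large | Satisfies A (C j)} + n * f / t :=
        add_le_add (le_mul_of_one_le_left (Nat.cast_nonneg _) ht) falsified_le
  rw [split a, split A]
  linarith

theorem one_le_mul_of_satisfies [Fintype ι] (hocc : ∀ l, #{j | l ∈ C j} ≤ f) {j : ι}
    (hj : Satisfies A (C j)) : 1 ≤ f * n := by
  obtain ⟨l, hl, -⟩ := hj
  have hf : 0 < #{j | l ∈ C j} := card_pos.mpr ⟨j, by simpa using hl⟩
  exact Nat.mul_pos (hf.trans_le (hocc l)) l.1.pos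

theorem card_literal_le_of_card_variable_le [Fintype ι]
    (hocc : ∀ i, #{j | (i, true) ∈ C j ∨ (i, false) ∈ C j} ≤ f) (l : Fin n × Bool) :
    #{j | l ∈ C j} ≤ f := by
  refine (card_le_card (monotone_filter_right _ fun j _ hl => ?_)).trans (hocc l.1)
  obtain ⟨i, _ | _⟩ := l
  exacts [Or.inr hl, Or.inl hl]

theorem apply_le_of_eq_true_iff_le {α : Type*} [LinearOrder α] {x : Bool} {g : Bool → α}
    (hx : x = true ↔ g true ≤ g false) (b : Bool) : g x ≤ g b := by
  cases x <;> cases b <;> grind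

end Counting

theorem stmt_12_general (n m f : ℕ) (C : Fin m → Finset (Fin n × Bool))
    (hocc : ∀ l, #{j | l ∈ C j} ≤ f) (A : Fin n → Bool) (hA : 1 ≤ #{j | Satisfies A (C j)})
    (a : Fin n → Bool)
    (ha : ∀ i b, #(smallSet n m C f (i, a i)) ≤ #(smallSet n m C f (i, b))) :
    (#{j | Satisfies a (C j)} : ℝ) ≤ 2 * √(f * n) * #{j | Satisfies A (C j)} := by
  obtain ⟨j, hj⟩ := card_pos.mp hA
  have one_le_sqrt : 1 ≤ √(f * n : ℝ) :=
    Real.one_le_sqrt.mpr (mod_cast one_le_mul_of_satisfies hocc (mem_filter.mp hj).2)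
  calc (#{j | Satisfies a (C j)} : ℝ)
    _ ≤ √(f * n) * #{j | Satisfies A (C j)} + n * f / √(f * n) :=
      card_satisfies_le_mul_add_div one_le_sqrt hocc ha
    _ = √(f * n) * #{j | Satisfies A (C j)} + √(f * n) * 1 := by
      rw [mul_comm (n : ℝ), Real.div_sqrt, mul_one]
    _ ≤ √(f * n) * #{j | Satisfies A (C j)} + √(f * n) * #{j | Satisfies A (C j)} := by
      gcongr
      exact_mod_cast hA
    _ = 2 * √(f * n) * #{j | Satisfies A (C j)} := by ring

/-- Let `C 1, …, C m` be clauses over `n ≥ 1` Boolean variables, `f ≥ 1`,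
each variable occurring (in either polarity) in at most `f` clauses. Let `opt ≥ 1` be
the minimum number of satisfied clauses over all assignments. Call a clause small if it
has at most `√(f·n)` literals, and let `S_ℓ` be the set of indices of small clauses
containing literal `ℓ`. Define `a` by `a i = true` iff `|S_(i,true)| ≤ |S_(i,false)|`.
Then `a` satisfies at most `2·√(f·n)·opt` clauses. -/
theorem stmt_12 (n m : ℕ) (hn : 1 ≤ n) (f : ℕ) (hf : 1 ≤ f)
    (C : Fin m → Finset (Fin n × Bool))
    (hgood : ∀ j (i : Fin n), ¬ (((i, true) ∈ C j) ∧ ((i, false) ∈ C j)))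
    (hocc : ∀ i : Fin n,
      (Finset.univ.filter fun j => (i, true) ∈ C j ∨ (i, false) ∈ C j).card ≤ f)
    (hopt : 1 ≤ ⨅ A : Fin n → Bool, (Finset.univ.filter fun j => Satisfies A (C j)).card)
    (a : Fin n → Bool)
    (ha : ∀ i : Fin n,
      a i = true ↔ (smallSet n m C f (i, true)).card ≤ (smallSet n m C f (i, false)).card) :
    ((Finset.univ.filter fun j => Satisfies a (C j)).card : ℝ)
      ≤ 2 * Real.sqrt ((f : ℝ) * n) *
          ((⨅ A : Fin n → Bool, (Finset.univ.filter fun j => Satisfies A (C j)).card : ℕ) : ℝ) := by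
  obtain ⟨A, hA⟩ := exists_eq_ciInf_of_finite (f := fun A => #{j | Satisfies A (C j)})
  rw [← hA] at hopt ⊢
  exact stmt_12_general n m f C (card_literal_le_of_card_variable_le hocc) A hopt a
    fun i => apply_le_of_eq_true_iff_le (g := fun b => #(smallSet n m C f (i, b))) (ha i)
end

section
/- Let k, t ≥ 1 and consider Boolean variables indexed by pairs (a, b) ∈ Fin k × Fin t. Let A : (Fin k → Fin t) → Bool and let i : Fin k → Fin t satisfy A i = false. Consider the following clauses: for each j : Fin k → Fin t with A j = true, the clause P_j = { ((a, j a), true) : a ∈ Fin k }; and for each nonempty subset Z ⊆ Fin k, the clause B_Z = { ((a, i a), false) : a ∈ Z } ∪ { ((a, i a), true) : a ∈ Fin k, a ∉ Z }. Then the assignment x defined by x (a, b) = false if b = i a and x (a, b) = true otherwise satisfies every clause P_j with A j = true and every clause B_Z with Z nonempty. -/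
/-- An assignment `x` over variables `V` satisfies a clause `C` (a finite set of
literals, i.e. pairs of a variable and a sign) iff some literal `(v, s) ∈ C` has
`x v = s`. -/
def LSat {V : Type*} (x : V → Bool) (C : Finset (V × Bool)) : Prop :=
  ∃ l ∈ C, x l.1 = l.2

section Clauses

variable {V ι : Type*} {x : V → Bool}

theorem lSat_union_iff [DecidableEq V] {C D : Finset (V × Bool)} :
    LSat x (C ∪ D) ↔ LSat x C ∨ LSat x D := by
  simp only [LSat, Finset.mem_union, or_and_right, exists_or]

theorem lSat_image_iff [DecidableEq V] {s : Finset ι} {l : ι → V × Bool} :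
    LSat x (s.image l) ↔ ∃ a ∈ s, x (l a).1 = (l a).2 :=
  Finset.exists_mem_image

/-- The clause asserting that some variable `v a` is true; Alice's clause `P_j` is the case
`v a = (a, j a)`. -/
def positiveClause [DecidableEq V] [Fintype ι] (v : ι → V) : Finset (V × Bool) :=
  Finset.univ.image fun a => (v a, true)

/-- The clause in the variables `v a` whose negated variables are those indexed by `Z`; Bob's
clause `B_Z` is the case `v a = (a, i a)`. -/
def signedClause [DecidableEq V] [Fintype ι] [DecidableEq ι] (v : ι → V) (Z : Finset ι) :
    Finset (V × Bool) :=
  (Z.image fun a => (v a, false)) ∪ ((Finset.univ \ Z).image fun a => (v a, true))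

theorem lSat_positiveClause_iff [DecidableEq V] [Fintype ι] {v : ι → V} :
    LSat x (positiveClause v) ↔ ∃ a, x (v a) = true := by
  simp only [positiveClause, lSat_image_iff, Finset.mem_univ, true_and]

theorem lSat_signedClause_iff [DecidableEq V] [Fintype ι] [DecidableEq ι] {v : ι → V}
    {Z : Finset ι} :
    LSat x (signedClause v Z) ↔ (∃ a ∈ Z, x (v a) = false) ∨ ∃ a ∉ Z, x (v a) = true := by
  simp only [signedClause, lSat_union_iff, lSat_image_iff, Finset.mem_sdiff, Finset.mem_univ,
    true_and]

end Clauses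

section OffGraph

variable {ι β : Type*} [DecidableEq β] {i : ι → β}

/-- The indicator of the complement of the graph of `i`: the assignment falsifying exactly the
variables `(a, i a)`. -/
def offGraph (i : ι → β) (p : ι × β) : Bool :=
  if p.2 = i p.1 then false else true

theorem offGraph_eq_true_iff {p : ι × β} : offGraph i p = true ↔ p.2 ≠ i p.1 := by
  simp [offGraph]

theorem offGraph_eq_false_iff {p : ι × β} : offGraph i p = false ↔ p.2 = i p.1 := by
  simp [offGraph]

variable [Fintype ι] [DecidableEq ι]

theorem lSat_offGraph_positiveClause_iff {j : ι → β} :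
    LSat (offGraph i) (positiveClause fun a => (a, j a)) ↔ j ≠ i := by
  simp only [lSat_positiveClause_iff, offGraph_eq_true_iff, Function.ne_iff]

theorem lSat_offGraph_signedClause_iff {Z : Finset ι} :
    LSat (offGraph i) (signedClause (fun a => (a, i a)) Z) ↔ Z.Nonempty := by
  simp only [lSat_signedClause_iff, offGraph_eq_false_iff, offGraph_eq_true_iff, ne_eq,
    not_true_eq_false, and_true, and_false, exists_false, or_false, Finset.Nonempty]

theorem stmt_18_general (A : (ι → β) → Bool) (i : ι → β) (hAi : A i = false) :
    (∀ j : ι → β, A j = true → LSat (offGraph i) (positiveClause fun a => (a, j a))) ∧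
    (∀ Z : Finset ι, Z.Nonempty →
      LSat (offGraph i) (signedClause (fun a => (a, i a)) Z)) := by
  refine ⟨fun j hAj => lSat_offGraph_positiveClause_iff.mpr ?_,
    fun Z hZ => lSat_offGraph_signedClause_iff.mpr hZ⟩
  rintro rfl
  exact Bool.false_ne_true (hAi.symm.trans hAj)

end OffGraph

/-- Let `k, t ≥ 1` with Boolean variables indexed by `Fin k × Fin t`.
Let `A : (Fin k → Fin t) → Bool` and `i : Fin k → Fin t` with `A i = false`. For each
`j` with `A j = true`, form the clause `P_j = {((a, j a), true) : a ∈ Fin k}`; for each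
nonempty `Z ⊆ Fin k`, form the clause
`B_Z = {((a, i a), false) : a ∈ Z} ∪ {((a, i a), true) : a ∉ Z}`. Then the assignment
`x` with `x (a, b) = false` iff `b = i a` satisfies every clause `P_j` with `A j = true`
and every clause `B_Z` with `Z` nonempty. -/
theorem stmt_18 (k t : ℕ) (hk : 1 ≤ k) (ht : 1 ≤ t)
    (A : (Fin k → Fin t) → Bool) (i : Fin k → Fin t) (hAi : A i = false)
    (x : Fin k × Fin t → Bool)
    (hx : ∀ (a : Fin k) (b : Fin t), x (a, b) = if b = i a then false else true) :
    (∀ j : Fin k → Fin t, A j = true →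
      LSat x (Finset.univ.image fun a : Fin k => (((a, j a) : Fin k × Fin t), true))) ∧
    (∀ Z : Finset (Fin k), Z.Nonempty →
      LSat x ((Z.image fun a => (((a, i a) : Fin k × Fin t), false)) ∪
        ((Finset.univ \ Z).image fun a => (((a, i a) : Fin k × Fin t), true)))) := by
  obtain rfl : x = offGraph i := funext fun p => hx p.1 p.2
  exact stmt_18_general A i hAi
end
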